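/- arXiv:1409.8130 — 6 statements merged into one kernel-verified Lean document; each statement's English description precedes it below -/
import Mathlib

section
/- Consider the semi-discretized linear rotating shallow water equations: let Φ : ℝ → (C → ℝ) and U : ℝ → (E → ℝ) be differentiable and satisfy, for all t, Φ'(t) = −φ₀ • D₂.mulVec (U t) and M.mulVec (U' t) = f • W.mulVec (U t) − D̄₁.mulVec (L.mulVec (Φ t)), where D̄₁ = −D₂ᵀ. If L and M are symmetric and W is antisymmetric (Wᵀ = −W), then the discrete energy E(t) = (1/2) ⟪Φ t, L.mulVec (Φ t)⟫ + (φ₀/2) ⟪U t, M.mulVec (U t)⟫ is constant in time. -/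
open Matrix

/-! Pairing the mass equation with `L Φ` and the momentum equation with `φ₀ U`, the gradient term
`φ₀ ⟪U, D₂ᵀ L Φ⟫` cancels the divergence term `-φ₀ ⟪D₂ U, L Φ⟫` because the discrete gradient is
minus the adjoint of the discrete divergence, and the Coriolis force does no work because `W` is
antisymmetric. Symmetry of `L` and `M` identifies the sum of the two pairings with `dE/dt`. -/

section Algebra

variable {R m n : Type*} [CommRing R] [Fintype m] [Fintype n]

theorem dotProduct_mulVec_comm_of_isSymm {A : Matrix n n R} (hA : A.IsSymm) (x y : n → R) :
    x ⬝ᵥ A *ᵥ y = y ⬝ᵥ A *ᵥ x := by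
  rw [← dotProduct_transpose_mulVec, hA.eq]

theorem dotProduct_mulVec_self_eq_zero_of_transpose_eq_neg [IsAddTorsionFree R]
    {A : Matrix n n R} (hA : Aᵀ = -A) (x : n → R) : x ⬝ᵥ A *ᵥ x = 0 := by
  rw [← self_eq_neg]
  calc x ⬝ᵥ A *ᵥ x = x ⬝ᵥ Aᵀ *ᵥ x := (dotProduct_transpose_mulVec A x x).symm
    _ = -(x ⬝ᵥ A *ᵥ x) := by rw [hA, neg_mulVec, dotProduct_neg]

theorem swe_energy_rate_eq_zero [IsAddTorsionFree R] {D : Matrix m n R} {L : Matrix m m R}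
    {M W : Matrix n n R} {φ₀ f : R} (hW : Wᵀ = -W) {φ φ' : m → R} {u u' : n → R}
    (hφ : φ' = -(φ₀ • D *ᵥ u)) (hu : M *ᵥ u' = f • W *ᵥ u - (-Dᵀ) *ᵥ (L *ᵥ φ)) :
    φ' ⬝ᵥ L *ᵥ φ + φ₀ * (u ⬝ᵥ M *ᵥ u') = 0 := by
  have mass_power : φ' ⬝ᵥ L *ᵥ φ = -(φ₀ * (D *ᵥ u ⬝ᵥ L *ᵥ φ)) := by
    rw [hφ, neg_dotProduct, smul_dotProduct, smul_eq_mul]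
  have coriolis_power : u ⬝ᵥ f • W *ᵥ u = 0 := by
    rw [dotProduct_smul, dotProduct_mulVec_self_eq_zero_of_transpose_eq_neg hW, smul_zero]
  have gradient_power : u ⬝ᵥ (-Dᵀ) *ᵥ (L *ᵥ φ) = -(D *ᵥ u ⬝ᵥ L *ᵥ φ) := by
    rw [neg_mulVec, dotProduct_neg, dotProduct_transpose_mulVec, dotProduct_comm]
  rw [mass_power, hu, dotProduct_sub, coriolis_power, gradient_power]
  ring

end Algebra

section Calculus

variable {𝕜 𝔸 m n : Type*} [NontriviallyNormedField 𝕜] [NormedRing 𝔸] [NormedAlgebra 𝕜 𝔸]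
  [Fintype n] {t : 𝕜}

theorem hasDerivAt_dotProduct {x y : 𝕜 → n → 𝔸} {x' y' : n → 𝔸}
    (hx : HasDerivAt x x' t) (hy : HasDerivAt y y' t) :
    HasDerivAt (fun s ↦ x s ⬝ᵥ y s) (x' ⬝ᵥ y t + x t ⬝ᵥ y') t := by
  simp only [dotProduct, ← Finset.sum_add_distrib]
  exact .fun_sum fun i _ ↦ (hasDerivAt_pi.1 hx i).mul (hasDerivAt_pi.1 hy i)

theorem hasDerivAt_const_mulVec (A : Matrix m n 𝔸) {x : 𝕜 → n → 𝔸} {x' : n → 𝔸}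
    (hx : HasDerivAt x x' t) : HasDerivAt (fun s ↦ A *ᵥ x s) (A *ᵥ x') t :=
  hasDerivAt_pi.2 fun i ↦ .fun_sum fun j _ ↦ (hasDerivAt_pi.1 hx j).const_mul (A i j)

end Calculus

section Energy

variable {𝕜 C E : Type*} [Fintype C] [Fintype E]

/-- The energy `½ ⟪φ, L φ⟫ + (φ₀ / 2) ⟪u, M u⟫` of the linear shallow water state with geopotential
`φ` and velocity `u`, the invariant of the semi-discrete equations with mass matrices `L` and `M`.
The pairing is bilinear, also over `ℂ`. -/
def discreteEnergy [Field 𝕜] (φ₀ : 𝕜) (L : Matrix C C 𝕜) (M : Matrix E E 𝕜)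
    (φ : C → 𝕜) (u : E → 𝕜) : 𝕜 :=
  (1 / 2) * (φ ⬝ᵥ L *ᵥ φ) + (φ₀ / 2) * (u ⬝ᵥ M *ᵥ u)

theorem hasDerivAt_discreteEnergy [NontriviallyNormedField 𝕜] [NeZero (2 : 𝕜)] (φ₀ : 𝕜)
    {L : Matrix C C 𝕜} {M : Matrix E E 𝕜} (hL : L.IsSymm) (hM : M.IsSymm)
    {Φ : 𝕜 → C → 𝕜} {U : 𝕜 → E → 𝕜} {φ' : C → 𝕜} {u' : E → 𝕜} {t : 𝕜}
    (hΦ : HasDerivAt Φ φ' t) (hU : HasDerivAt U u' t) :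
    HasDerivAt (fun s ↦ discreteEnergy φ₀ L M (Φ s) (U s))
      (φ' ⬝ᵥ L *ᵥ Φ t + φ₀ * (U t ⬝ᵥ M *ᵥ u')) t := by
  have hpot := hasDerivAt_dotProduct hΦ (hasDerivAt_const_mulVec L hΦ)
  have hkin := hasDerivAt_dotProduct hU (hasDerivAt_const_mulVec M hU)
  refine ((hpot.const_mul (1 / 2)).fun_add (hkin.const_mul (φ₀ / 2))).congr_deriv ?_
  rw [dotProduct_mulVec_comm_of_isSymm hL (Φ t) φ', dotProduct_mulVec_comm_of_isSymm hM u' (U t)]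
  field [NeZero.ne (2 : 𝕜)]

theorem energy_conservation_linear_swe_general [RCLike 𝕜]
    (D₂ : 𝕜 → Matrix C E 𝕜) {L : Matrix C C 𝕜} {M : Matrix E E 𝕜} {W : 𝕜 → Matrix E E 𝕜}
    (φ₀ : 𝕜) (f : 𝕜 → 𝕜) (hL : L.IsSymm) (hM : M.IsSymm) (hW : ∀ t, (W t)ᵀ = -W t)
    {Φ Φd : 𝕜 → C → 𝕜} {U Ud : 𝕜 → E → 𝕜}
    (hΦdiff : ∀ t, HasDerivAt Φ (Φd t) t) (hUdiff : ∀ t, HasDerivAt U (Ud t) t)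
    (hΦeq : ∀ t, Φd t = -(φ₀ • D₂ t *ᵥ U t))
    (hUeq : ∀ t, M *ᵥ Ud t = f t • W t *ᵥ U t - (-(D₂ t)ᵀ) *ᵥ (L *ᵥ Φ t)) (t s : 𝕜) :
    discreteEnergy φ₀ L M (Φ t) (U t) = discreteEnergy φ₀ L M (Φ s) (U s) := by
  have hE : ∀ r, HasDerivAt (fun r ↦ discreteEnergy φ₀ L M (Φ r) (U r)) 0 r := fun r ↦
    (hasDerivAt_discreteEnergy φ₀ hL hM (hΦdiff r) (hUdiff r)).congr_deriv
      (swe_energy_rate_eq_zero (hW r) (hΦeq r) (hUeq r))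
  exact is_const_of_deriv_eq_zero (fun r ↦ (hE r).differentiableAt) (fun r ↦ (hE r).deriv) t s

end Energy

/-- Energy conservation for the semi-discrete linear rotating shallow water
equations: if `L`, `M` are symmetric mass matrices, `W` is antisymmetric,
and `(Φ, U)` solve `Φ' = -φ₀ • D₂ U`, `M U' = f • W U - D̄₁ L Φ` with
`D̄₁ = -D₂ᵀ`, then the discrete energy
`E(t) = ½ ⟪Φ, L Φ⟫ + (φ₀/2) ⟪U, M U⟫` is constant in time. -/
theorem energy_conservation_linear_swe
    {C E : Type*} [Fintype C] [Fintype E]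
    (D₂ : Matrix C E ℝ) (L : Matrix C C ℝ) (M W : Matrix E E ℝ)
    (φ₀ f : ℝ) (hφ₀ : 0 < φ₀)
    (hL : Lᵀ = L) (hM : Mᵀ = M) (hW : Wᵀ = -W)
    (Φ : ℝ → C → ℝ) (U : ℝ → E → ℝ) (Φd : ℝ → C → ℝ) (Ud : ℝ → E → ℝ)
    (hΦdiff : ∀ t : ℝ, HasDerivAt Φ (Φd t) t)
    (hUdiff : ∀ t : ℝ, HasDerivAt U (Ud t) t)
    (hΦeq : ∀ t : ℝ, Φd t = -(φ₀ • D₂.mulVec (U t)))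
    (hUeq : ∀ t : ℝ, M.mulVec (Ud t) =
      f • W.mulVec (U t) - (-D₂ᵀ).mulVec (L.mulVec (Φ t))) :
    ∀ t s : ℝ,
      (1 / 2) * (Φ t ⬝ᵥ L.mulVec (Φ t)) + (φ₀ / 2) * (U t ⬝ᵥ M.mulVec (U t)) =
      (1 / 2) * (Φ s ⬝ᵥ L.mulVec (Φ s)) + (φ₀ / 2) * (U s ⬝ᵥ M.mulVec (U s)) :=
  energy_conservation_linear_swe_general (fun _ ↦ D₂) φ₀ (fun _ ↦ f) hL hM (fun _ ↦ hW)
    hΦdiff hUdiff hΦeq hUeq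
end

section
/- Existence of steady discrete geostrophic modes: assume D₂ D₁ = 0, W is antisymmetric (Wᵀ = −W), L is invertible, and the identity −D₁ᵀ W = R D₂ holds. Then for every stream function vector Ψ : V → ℝ, the fields U := −D₁.mulVec Ψ and Φ := f • L⁻¹.mulVec (Rᵀ.mulVec Ψ) satisfy both D₂.mulVec U = 0 and f • W.mulVec U − D̄₁.mulVec (L.mulVec Φ) = 0, where D̄₁ = −D₂ᵀ; hence the constant-in-time pair (Φ, U) is a steady solution of the semi-discrete linear rotating shallow water equations Φ' = −φ₀ • D₂.mulVec U, M.mulVec U' = f • W.mulVec U − D̄₁.mulVec (L.mulVec Φ). -/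
open Matrix

/-!
Transposing the TRiSK identity and using the antisymmetry of `W` gives `W D₁ = D₂ᵀ Rᵀ`. Hence the
Coriolis term of the velocity `-D₁ Ψ` is the dual gradient of `Rᵀ Ψ`, and a pressure gradient
balances it as soon as `L Φ = f Rᵀ Ψ`. Such a velocity is also nondivergent, so both tendencies of
the shallow water equations vanish.
-/

section Algebra

variable {α C E V : Type*}

theorem divergence_neg_perpGrad_eq_zero [NonUnitalRing α] [Fintype E] [Fintype V]
    {D₂ : Matrix C E α} {D₁ : Matrix E V α} (hDD : D₂ * D₁ = 0) (Ψ : V → α) :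
    D₂ *ᵥ -(D₁ *ᵥ Ψ) = 0 := by
  rw [mulVec_neg, mulVec_mulVec, hDD, zero_mulVec, neg_zero]

theorem coriolis_mul_perpGrad [NonUnitalCommRing α] [Fintype C] [Fintype E]
    {D₂ : Matrix C E α} {D₁ : Matrix E V α} {W : Matrix E E α} {R : Matrix V C α}
    (hW : Wᵀ = -W) (hTRiSK : -(D₁ᵀ * W) = R * D₂) : W * D₁ = D₂ᵀ * Rᵀ :=
  calc
    W * D₁ = -(Wᵀ * D₁) := by rw [hW, Matrix.neg_mul, neg_neg]
    _ = (-(D₁ᵀ * W))ᵀ := by rw [transpose_neg, transpose_mul, transpose_transpose]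
    _ = D₂ᵀ * Rᵀ := by rw [hTRiSK, transpose_mul]

theorem coriolis_neg_perpGrad_eq_dualGrad [NonUnitalCommRing α] [Fintype C] [Fintype E] [Fintype V]
    {D₂ : Matrix C E α} {D₁ : Matrix E V α} {W : Matrix E E α} {R : Matrix V C α}
    (hW : Wᵀ = -W) (hTRiSK : -(D₁ᵀ * W) = R * D₂) (Ψ : V → α) :
    W *ᵥ -(D₁ *ᵥ Ψ) = (-D₂ᵀ) *ᵥ (Rᵀ *ᵥ Ψ) := by
  rw [mulVec_neg, neg_mulVec, mulVec_mulVec, mulVec_mulVec, coriolis_mul_perpGrad hW hTRiSK]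

theorem mulVec_smul_nonsing_inv_mulVec [CommRing α] [Fintype C] [DecidableEq C]
    {L : Matrix C C α} (hL : IsUnit L.det) (c : α) (v : C → α) :
    L *ᵥ (c • L⁻¹ *ᵥ v) = c • v := by
  rw [mulVec_smul, mulVec_mulVec, mul_nonsing_inv L hL, one_mulVec]

/-- Discrete geostrophic balance: the Coriolis term `f W U` cancels the pressure gradient
`D̄₁ L Φ`, the dual gradient `D̄₁` being written as `-D₂ᵀ`. -/
def IsGeostrophicallyBalanced [CommRing α] [Fintype C] [Fintype E] (D₂ : Matrix C E α)
    (L : Matrix C C α) (W : Matrix E E α) (f : α) (Φ : C → α) (U : E → α) : Prop :=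
  f • W *ᵥ U - (-D₂ᵀ) *ᵥ (L *ᵥ Φ) = 0

theorem isGeostrophicallyBalanced_neg_perpGrad [CommRing α] [Fintype C] [Fintype E] [Fintype V]
    {D₂ : Matrix C E α} {D₁ : Matrix E V α} {L : Matrix C C α} {W : Matrix E E α}
    {R : Matrix V C α} {f : α} (hW : Wᵀ = -W) (hTRiSK : -(D₁ᵀ * W) = R * D₂)
    {Φ : C → α} {Ψ : V → α} (hΦ : L *ᵥ Φ = f • Rᵀ *ᵥ Ψ) :
    IsGeostrophicallyBalanced D₂ L W f Φ (-(D₁ *ᵥ Ψ)) := by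
  rw [IsGeostrophicallyBalanced, coriolis_neg_perpGrad_eq_dualGrad hW hTRiSK, hΦ, mulVec_smul,
    sub_self]

end Algebra

section Dynamics

variable {𝕜 𝔸 C E V : Type*} [NontriviallyNormedField 𝕜] [NormedCommRing 𝔸] [NormedAlgebra 𝕜 𝔸]
  [Fintype C] [Fintype E]

/-- Solutions of the semi-discrete linear rotating shallow water equations
`Φ' = -φ₀ D₂ U`, `M U' = f W U - D̄₁ L Φ` with `D̄₁ = -D₂ᵀ`. The momentum equation is stated for the
derivative of `M U`. Time `𝕜` and amplitudes `𝔸` are kept apart so that complex wave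
amplitudes evolving in real time are included. -/
structure IsLinearShallowWaterSolution (D₂ : Matrix C E 𝔸) (L : Matrix C C 𝔸) (M W : Matrix E E 𝔸)
    (f φ₀ : 𝔸) (Φ : 𝕜 → C → 𝔸) (U : 𝕜 → E → 𝔸) : Prop where
  mass : ∀ t, HasDerivAt Φ (-(φ₀ • D₂ *ᵥ U t)) t
  momentum : ∀ t, HasDerivAt (fun s ↦ M *ᵥ U s) (f • W *ᵥ U t - (-D₂ᵀ) *ᵥ (L *ᵥ Φ t)) t

theorem isLinearShallowWaterSolution_const_iff {D₂ : Matrix C E 𝔸} {L : Matrix C C 𝔸}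
    {M W : Matrix E E 𝔸} {f φ₀ : 𝔸} {Φ : C → 𝔸} {U : E → 𝔸} :
    IsLinearShallowWaterSolution D₂ L M W f φ₀ (fun _ : 𝕜 ↦ Φ) (fun _ ↦ U) ↔
      φ₀ • D₂ *ᵥ U = 0 ∧ IsGeostrophicallyBalanced D₂ L W f Φ U := by
  constructor
  · intro h
    exact ⟨neg_eq_zero.mp ((h.mass 0).unique (hasDerivAt_const 0 Φ)),
      (h.momentum 0).unique (hasDerivAt_const 0 (M *ᵥ U))⟩
  · rintro ⟨hmass, hbal⟩
    refine ⟨fun t ↦ ?_, fun t ↦ ?_⟩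
    · simpa only [hmass, neg_zero] using hasDerivAt_const t Φ
    · exact (hasDerivAt_const t (M *ᵥ U)).congr_deriv hbal.symm

variable (𝕜) in
theorem steady_geostrophic_modes_general [Fintype V] {D₂ : Matrix C E 𝔸} {D₁ : Matrix E V 𝔸}
    {L : Matrix C C 𝔸} (M : Matrix E E 𝔸) {W : Matrix E E 𝔸} {R : Matrix V C 𝔸} {f : 𝔸} (φ₀ : 𝔸)
    (hDD : D₂ * D₁ = 0) (hW : Wᵀ = -W) (hTRiSK : -(D₁ᵀ * W) = R * D₂)
    {Φ : C → 𝔸} {Ψ : V → 𝔸} (hΦ : L *ᵥ Φ = f • Rᵀ *ᵥ Ψ) :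
    D₂ *ᵥ -(D₁ *ᵥ Ψ) = 0 ∧
    IsGeostrophicallyBalanced D₂ L W f Φ (-(D₁ *ᵥ Ψ)) ∧
    IsLinearShallowWaterSolution D₂ L M W f φ₀ (fun _ : 𝕜 ↦ Φ) (fun _ ↦ -(D₁ *ᵥ Ψ)) := by
  have hdiv := divergence_neg_perpGrad_eq_zero hDD Ψ
  have hbal := isGeostrophicallyBalanced_neg_perpGrad hW hTRiSK hΦ
  have hmass : φ₀ • D₂ *ᵥ -(D₁ *ᵥ Ψ) = 0 := by rw [hdiv, smul_zero]
  exact ⟨hdiv, hbal, isLinearShallowWaterSolution_const_iff.mpr ⟨hmass, hbal⟩⟩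

end Dynamics

/-- Existence of steady discrete geostrophic modes: assuming `D₂ D₁ = 0`,
antisymmetry of `W`, invertibility of `L` and the discrete Coriolis (TRiSK)
identity `-D₁ᵀ W = R D₂`, for every stream function `Ψ` the fields
`U = -D₁ Ψ` and `Φ = f • L⁻¹ Rᵀ Ψ` are nondivergent and in discrete
geostrophic balance, and the constant-in-time pair `(Φ, U)` is a steady
solution of the semi-discrete linear rotating shallow water equations. -/
theorem steady_geostrophic_modes
    {C E V : Type*} [Fintype C] [Fintype E] [Fintype V] [DecidableEq C]
    (D₂ : Matrix C E ℝ) (D₁ : Matrix E V ℝ) (L : Matrix C C ℝ)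
    (M W : Matrix E E ℝ) (R : Matrix V C ℝ) (f φ₀ : ℝ)
    (hDD : D₂ * D₁ = 0) (hW : Wᵀ = -W) (hL : IsUnit L.det)
    (hTRiSK : -(D₁ᵀ * W) = R * D₂) (Ψ : V → ℝ) :
    D₂.mulVec (-(D₁.mulVec Ψ)) = 0 ∧
    f • W.mulVec (-(D₁.mulVec Ψ)) -
      (-D₂ᵀ).mulVec (L.mulVec (f • L⁻¹.mulVec (Rᵀ.mulVec Ψ))) = 0 ∧
    (∀ t : ℝ, HasDerivAt (fun _ : ℝ => f • L⁻¹.mulVec (Rᵀ.mulVec Ψ))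
        (-(φ₀ • D₂.mulVec (-(D₁.mulVec Ψ)))) t) ∧
    (∀ t : ℝ, HasDerivAt (fun _ : ℝ => M.mulVec (-(D₁.mulVec Ψ)))
        (f • W.mulVec (-(D₁.mulVec Ψ)) -
          (-D₂ᵀ).mulVec (L.mulVec (f • L⁻¹.mulVec (Rᵀ.mulVec Ψ)))) t) := by
  obtain ⟨hdiv, hbal, hsol⟩ := steady_geostrophic_modes_general ℝ M φ₀ hDD hW hTRiSK
    (mulVec_smul_nonsing_inv_mulVec hL f (Rᵀ *ᵥ Ψ))
  exact ⟨hdiv, hbal, hsol.mass, hsol.momentum⟩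
end

section
/- No spurious vorticity generation: assume D₂ D₁ = 0 and the identity −D₁ᵀ W = R D₂. Then for every Ψ : V → ℝ and every Φ : C → ℝ, one has D₁ᵀ.mulVec ( f • W.mulVec (D₁.mulVec Ψ) + D̄₁.mulVec (L.mulVec Φ) ) = 0, where D̄₁ = −D₂ᵀ. In particular, for a nondivergent velocity U = −D₁.mulVec Ψ, neither the Coriolis term f • W.mulVec U nor the pressure gradient term −D̄₁.mulVec (L.mulVec Φ) contributes to the tendency of the discrete relative vorticity N Ξ = D̄₂ M U (with D̄₂ = D₁ᵀ). -/
open Matrix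

section

variable {C E V K : Type*}

/-- The dual gradient `D̄₁ = -D₂ᵀ`, from functions on dual vertices, which are indexed by the
primal cells `C`, to edge fields. -/
def dualGradient [Neg K] (D₂ : Matrix C E K) : Matrix E C K :=
  -D₂ᵀ

/-- The dual curl `D̄₂ = D₁ᵀ`, from edge fields to vorticities on dual cells, which are indexed by
the primal vertices `V`. -/
def dualCurl (D₁ : Matrix E V K) : Matrix V E K :=
  D₁ᵀ

theorem dualCurl_mul_dualGradient_eq_zero [Fintype E] [NonUnitalCommRing K]
    {D₂ : Matrix C E K} {D₁ : Matrix E V K} (hDD : D₂ * D₁ = 0) :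
    dualCurl D₁ * dualGradient D₂ = 0 := by
  rw [dualCurl, dualGradient, Matrix.mul_neg, ← transpose_mul, hDD, transpose_zero, neg_zero]

theorem dualCurl_mul_coriolis_mul_perpGradient_eq_zero [Fintype C] [Fintype E] [NonUnitalRing K]
    {D₂ : Matrix C E K} {D₁ : Matrix E V K} {W : Matrix E E K} {R : Matrix V C K}
    (hDD : D₂ * D₁ = 0) (hTRiSK : -(dualCurl D₁ * W) = R * D₂) :
    dualCurl D₁ * W * D₁ = 0 :=
  calc
    dualCurl D₁ * W * D₁ = -(R * D₂) * D₁ := by rw [← hTRiSK, neg_neg]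
    _ = -(R * (D₂ * D₁)) := by rw [Matrix.neg_mul, Matrix.mul_assoc]
    _ = 0 := by rw [hDD, Matrix.mul_zero, neg_zero]

theorem no_spurious_vorticity_generation_general [Fintype C] [Fintype E] [Fintype V]
    [CommRing K] {D₂ : Matrix C E K} {D₁ : Matrix E V K} {W : Matrix E E K}
    {R : Matrix V C K} (hDD : D₂ * D₁ = 0) (hTRiSK : -(dualCurl D₁ * W) = R * D₂)
    (f : K) (Ψ : V → K) (p : C → K) :
    dualCurl D₁ *ᵥ (f • W *ᵥ (D₁ *ᵥ Ψ) + dualGradient D₂ *ᵥ p) = 0 := by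
  have coriolis : dualCurl D₁ *ᵥ (f • W *ᵥ (D₁ *ᵥ Ψ)) = 0 := by
    rw [mulVec_smul, mulVec_mulVec, mulVec_mulVec,
      dualCurl_mul_coriolis_mul_perpGradient_eq_zero hDD hTRiSK, zero_mulVec, smul_zero]
  have pressure : dualCurl D₁ *ᵥ (dualGradient D₂ *ᵥ p) = 0 := by
    rw [mulVec_mulVec, dualCurl_mul_dualGradient_eq_zero hDD, zero_mulVec]
  rw [mulVec_add, coriolis, pressure, add_zero]

end

/-- No spurious vorticity generation: assuming `D₂ D₁ = 0` and the discrete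
Coriolis (TRiSK) identity `-D₁ᵀ W = R D₂`, for any stream function `Ψ` and
any geopotential `Φ`, neither the Coriolis term acting on the nondivergent
velocity `U = -D₁ Ψ` nor the pressure gradient term contributes to the
discrete vorticity tendency: `D̄₂ (f • W (D₁ Ψ) + D̄₁ (L Φ)) = 0`, where
`D̄₁ = -D₂ᵀ` and `D̄₂ = D₁ᵀ`. -/
theorem no_spurious_vorticity_generation
    {C E V : Type*} [Fintype C] [Fintype E] [Fintype V]
    (D₂ : Matrix C E ℝ) (D₁ : Matrix E V ℝ) (L : Matrix C C ℝ)
    (W : Matrix E E ℝ) (R : Matrix V C ℝ) (f : ℝ)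
    (hDD : D₂ * D₁ = 0) (hTRiSK : -(D₁ᵀ * W) = R * D₂) :
    ∀ (Ψ : V → ℝ) (Φ : C → ℝ),
      D₁ᵀ.mulVec (f • W.mulVec (D₁.mulVec Ψ) +
        (-D₂ᵀ).mulVec (L.mulVec Φ)) = 0 :=
  fun Ψ Φ => no_spurious_vorticity_generation_general hDD hTRiSK f Ψ (L *ᵥ Φ)
end

section
/- Time-independence of the linearized potential vorticity: assume D₂ D₁ = 0, N is invertible, and the identity −D₁ᵀ W = R D₂ holds. Let Φ : ℝ → (C → ℝ) and U : ℝ → (E → ℝ) be differentiable solutions of the semi-discrete linear equations Φ'(t) = −φ₀ • D₂.mulVec (U t) and M.mulVec (U' t) = f • W.mulVec (U t) − D̄₁.mulVec (L.mulVec (Φ t)), where D̄₁ = −D₂ᵀ. Define the discrete relative vorticity Ξ(t) := N⁻¹.mulVec (D̄₂.mulVec (M.mulVec (U t))) with D̄₂ = D₁ᵀ, and the averaged mass field Φ̃(t) := N⁻¹.mulVec (R.mulVec (Φ t)). Then the function t ↦ φ₀ • Ξ(t) − f • Φ̃(t) is constant; equivalently the linearized potential vorticity Ξ/φ₀ − f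 Φ̃/φ₀² is independent of time. -/
open Matrix

/-!
The dual curl `D₁ᵀ` annihilates the pressure gradient in the momentum equation, since
`D₁ᵀ D₂ᵀ = (D₂ D₁)ᵀ = 0`, and the TRiSK identity turns the curl of the Coriolis term into the
averaged divergence `-f R D₂ U`. Mass continuity gives `R Φ' = -φ₀ R D₂ U`, so `φ₀ D₁ᵀ M U` and
`f R Φ` have the same derivative. The potential vorticity is thus conserved already in integrated
form, before applying `N⁻¹`.
-/

section DiscreteVorticity

variable {C E V A : Type*} [Fintype C] [Fintype E]

theorem dualCurl_mulVec_dualGrad_mulVec [CommSemiring A] {D₂ : Matrix C E A} {D₁ : Matrix E V A}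
    (hDD : D₂ * D₁ = 0) (p : C → A) : D₁ᵀ *ᵥ (D₂ᵀ *ᵥ p) = 0 := by
  rw [mulVec_mulVec, ← transpose_mul, hDD, transpose_zero, zero_mulVec]

theorem dualCurl_mulVec_coriolis_mulVec [CommRing A] {D₂ : Matrix C E A} {D₁ : Matrix E V A}
    {W : Matrix E E A} {R : Matrix V C A} (hTRiSK : -(D₁ᵀ * W) = R * D₂) (u : E → A) :
    D₁ᵀ *ᵥ (W *ᵥ u) = -(R *ᵥ (D₂ *ᵥ u)) := by
  rw [mulVec_mulVec, mulVec_mulVec, ← hTRiSK, neg_mulVec, neg_neg]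

theorem dualCurl_mulVec_momentum_tendency [CommRing A] {D₂ : Matrix C E A} {D₁ : Matrix E V A}
    {W : Matrix E E A} {R : Matrix V C A} (hDD : D₂ * D₁ = 0) (hTRiSK : -(D₁ᵀ * W) = R * D₂)
    (f : A) (u : E → A) (p : C → A) :
    D₁ᵀ *ᵥ (f • W *ᵥ u - (-D₂ᵀ) *ᵥ p) = -(f • R *ᵥ (D₂ *ᵥ u)) := by
  rw [mulVec_sub, mulVec_smul, neg_mulVec, mulVec_neg, dualCurl_mulVec_dualGrad_mulVec hDD,
    dualCurl_mulVec_coriolis_mulVec hTRiSK, smul_neg, neg_zero, sub_zero]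

end DiscreteVorticity

theorem hasDerivAt_const_mulVec_s3 {𝕜 A m n : Type*} [NontriviallyNormedField 𝕜] [NormedRing A]
    [NormedAlgebra 𝕜 A] [Finite m] [Fintype n] (P : Matrix m n A) {u : 𝕜 → n → A} {u' : n → A}
    {t : 𝕜} (hu : HasDerivAt u u' t) : HasDerivAt (fun s ↦ P *ᵥ u s) (P *ᵥ u') t :=
  hasDerivAt_pi.2 fun i ↦ .fun_sum fun j _ ↦ (hasDerivAt_pi.1 hu j).const_mul (P i j)

section LinearizedPV

variable {𝕜 A C E V : Type*} [NormedCommRing A] [Fintype C] [Fintype E] [Finite V]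
  {D₂ : Matrix C E A} {D₁ : Matrix E V A} {M W : Matrix E E A} {R : Matrix V C A} {φ₀ f : A}
  {Φ : 𝕜 → C → A} {U : 𝕜 → E → A}

theorem hasDerivAt_integrated_linearized_pv_zero [NontriviallyNormedField 𝕜] [NormedAlgebra 𝕜 A]
    (hDD : D₂ * D₁ = 0) (hTRiSK : -(D₁ᵀ * W) = R * D₂) {t : 𝕜} {U' : E → A} {p : C → A}
    (hΦ : HasDerivAt Φ (-(φ₀ • D₂ *ᵥ U t)) t) (hU : HasDerivAt U U' t)
    (hMU : M *ᵥ U' = f • W *ᵥ U t - (-D₂ᵀ) *ᵥ p) :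
    HasDerivAt (fun s ↦ φ₀ • D₁ᵀ *ᵥ (M *ᵥ U s) - f • R *ᵥ Φ s) 0 t := by
  have := Fintype.ofFinite V
  have hcirc : HasDerivAt (fun s ↦ D₁ᵀ *ᵥ (M *ᵥ U s)) (-(f • R *ᵥ (D₂ *ᵥ U t))) t := by
    rw [← dualCurl_mulVec_momentum_tendency hDD hTRiSK f (U t) p, ← hMU]
    exact hasDerivAt_const_mulVec_s3 D₁ᵀ (hasDerivAt_const_mulVec_s3 M hU)
  have hmass : HasDerivAt (fun s ↦ R *ᵥ Φ s) (-(φ₀ • R *ᵥ (D₂ *ᵥ U t))) t := by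
    simpa only [mulVec_neg, mulVec_smul] using hasDerivAt_const_mulVec_s3 R hΦ
  refine ((hcirc.fun_const_smul φ₀).fun_sub (hmass.fun_const_smul f)).congr_deriv ?_
  rw [smul_neg, smul_neg, smul_comm φ₀ f, sub_self]

/-- The arbitrary cell field `p` takes the place of the pressure `L Φ`. -/
theorem linearized_pv_time_independent_general [RCLike 𝕜] [NormedAlgebra 𝕜 A]
    (hDD : D₂ * D₁ = 0) (hTRiSK : -(D₁ᵀ * W) = R * D₂) {U' : 𝕜 → E → A} {p : 𝕜 → C → A}
    (hΦ : ∀ t, HasDerivAt Φ (-(φ₀ • D₂ *ᵥ U t)) t) (hU : ∀ t, HasDerivAt U (U' t) t)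
    (hMU : ∀ t, M *ᵥ U' t = f • W *ᵥ U t - (-D₂ᵀ) *ᵥ p t) (t s : 𝕜) :
    φ₀ • D₁ᵀ *ᵥ (M *ᵥ U t) - f • R *ᵥ Φ t = φ₀ • D₁ᵀ *ᵥ (M *ᵥ U s) - f • R *ᵥ Φ s := by
  have := Fintype.ofFinite V
  have hderiv t := hasDerivAt_integrated_linearized_pv_zero hDD hTRiSK (hΦ t) (hU t) (hMU t)
  exact is_const_of_deriv_eq_zero (fun t ↦ (hderiv t).differentiableAt)
    (fun t ↦ (hderiv t).deriv) t s

end LinearizedPV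

/-- Time-independence of the linearized potential vorticity: if `D₂ D₁ = 0`,
`N` is invertible and the TRiSK identity `-D₁ᵀ W = R D₂` holds, then along
any differentiable solution `(Φ, U)` of the semi-discrete linear shallow
water equations the quantity `φ₀ • Ξ - f • Φ̃` is constant in time, where
`Ξ = N⁻¹ D̄₂ M U` is the discrete relative vorticity (`D̄₂ = D₁ᵀ`) and
`Φ̃ = N⁻¹ R Φ` is the averaged mass field; equivalently the linearized PV
`Ξ/φ₀ - f Φ̃/φ₀²` is independent of time. -/
theorem linearized_pv_time_independent
    {C E V : Type*} [Fintype C] [Fintype E] [Fintype V] [DecidableEq V]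
    (D₂ : Matrix C E ℝ) (D₁ : Matrix E V ℝ)
    (L : Matrix C C ℝ) (M : Matrix E E ℝ) (N : Matrix V V ℝ)
    (W : Matrix E E ℝ) (R : Matrix V C ℝ) (φ₀ f : ℝ) (hφ₀ : φ₀ ≠ 0)
    (hDD : D₂ * D₁ = 0) (hN : IsUnit N.det) (hTRiSK : -(D₁ᵀ * W) = R * D₂)
    (Φ : ℝ → C → ℝ) (U : ℝ → E → ℝ) (Φd : ℝ → C → ℝ) (Ud : ℝ → E → ℝ)
    (hΦdiff : ∀ t : ℝ, HasDerivAt Φ (Φd t) t)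
    (hUdiff : ∀ t : ℝ, HasDerivAt U (Ud t) t)
    (hΦeq : ∀ t : ℝ, Φd t = -(φ₀ • D₂.mulVec (U t)))
    (hUeq : ∀ t : ℝ, M.mulVec (Ud t) =
      f • W.mulVec (U t) - (-D₂ᵀ).mulVec (L.mulVec (Φ t))) :
    ∀ t s : ℝ,
      φ₀ • N⁻¹.mulVec (D₁ᵀ.mulVec (M.mulVec (U t))) -
        f • N⁻¹.mulVec (R.mulVec (Φ t)) =
      φ₀ • N⁻¹.mulVec (D₁ᵀ.mulVec (M.mulVec (U s))) -
        f • N⁻¹.mulVec (R.mulVec (Φ s)) := by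
  intro t s
  simpa only [mulVec_sub, mulVec_smul] using congrArg (N⁻¹ *ᵥ ·)
    (linearized_pv_time_independent_general hDD hTRiSK (fun t ↦ hΦeq t ▸ hΦdiff t) hUdiff hUeq t s)
end

section
/- Orthogonality of the rotational and weak-gradient parts: let M : Matrix E E ℝ be symmetric positive definite and suppose D₂ D₁ = 0. If v : E → ℝ satisfies M.mulVec v = D₂ᵀ.mulVec x for some x : C → ℝ and also v = D₁.mulVec ψ for some ψ : V → ℝ, then v = 0. -/
open Matrix

section

variable {R m n : Type*} [Fintype m] [Fintype n]

theorem star_dotProduct_conjTranspose_mulVec [NonUnitalSemiring R] [StarRing R]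
    (A : Matrix m n R) (v : n → R) (x : m → R) :
    star v ⬝ᵥ Aᴴ *ᵥ x = star (A *ᵥ v) ⬝ᵥ x := by
  rw [dotProduct_mulVec, star_mulVec]

theorem posDef_star_dotProduct_mulVec_eq_zero_iff [Ring R] [PartialOrder R] [StarRing R]
    {M : Matrix n n R} (hM : M.PosDef) {v : n → R} :
    star v ⬝ᵥ M *ᵥ v = 0 ↔ v = 0 := by
  refine ⟨fun h => ?_, fun h => by rw [h, mulVec_zero, dotProduct_zero]⟩
  by_contra hv
  exact (hM.dotProduct_mulVec_pos hv).ne' h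

theorem rotational_gradient_orthogonality_general [NonUnitalSemiring R] [StarRing R]
    {D : Matrix m n R} {M : Matrix n n R} (hM : ∀ u : n → R, star u ⬝ᵥ M *ᵥ u = 0 → u = 0)
    {v : n → R} {x : m → R} (hgrad : M *ᵥ v = Dᴴ *ᵥ x) (hdiv : D *ᵥ v = 0) :
    v = 0 := by
  apply hM
  calc
    star v ⬝ᵥ M *ᵥ v = star v ⬝ᵥ Dᴴ *ᵥ x := by rw [hgrad]
    _ = star (D *ᵥ v) ⬝ᵥ x := star_dotProduct_conjTranspose_mulVec D v x
    _ = 0 := by rw [hdiv, star_zero, zero_dotProduct]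

end

/-- Orthogonality of the rotational and weak-gradient parts: if `M` is
symmetric positive definite, `D₂ D₁ = 0`, and the vector `v` is both a weak
gradient (`M v = D₂ᵀ x`) and rotational (`v = D₁ ψ`), then `v = 0`. -/
theorem rotational_gradient_orthogonality
    {C E V : Type*} [Fintype C] [Fintype E] [Fintype V] [DecidableEq E]
    (D₂ : Matrix C E ℝ) (D₁ : Matrix E V ℝ) (M : Matrix E E ℝ)
    (hM : M.PosDef) (hDD : D₂ * D₁ = 0)
    (v : E → ℝ) (x : C → ℝ) (ψ : V → ℝ)
    (hv : M.mulVec v = D₂ᵀ.mulVec x) (hvψ : v = D₁.mulVec ψ) :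
    v = 0 := by
  have hdiv : D₂ *ᵥ v = 0 := by rw [hvψ, mulVec_mulVec, hDD, zero_mulVec]
  have hgrad : M *ᵥ v = D₂ᴴ *ᵥ x := by rw [hv, conjTranspose_eq_transpose_of_trivial]
  exact rotational_gradient_orthogonality_general
    (fun _ => (posDef_star_dotProduct_mulVec_eq_zero_iff hM).mp) hgrad hdiv
end

section
/- Discrete Helmholtz decomposition: let M : Matrix E E ℝ be symmetric positive definite, L : Matrix C C ℝ invertible, and suppose D₂ D₁ = 0 together with the exactness condition that the kernel of the linear map u ↦ D₂.mulVec u is contained in the range of the linear map ψ ↦ D₁.mulVec ψ. Then every U : E → ℝ can be decomposed as U = M⁻¹.mulVec (D̄₁.mulVec (L.mulVec Φ)) − D₁.mulVec Ψ for some Φ : C → ℝ and Ψ : V → ℝ, where D̄₁ = −D₂ᵀ; i.e., every discrete vector field is the sum of a discrete weak-gradient (divergent) part and a discrete rotational part. -/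
open Matrix

/-! For a positive definite weight `N`, the form `star x ⬝ᵥ (D * N * Dᴴ) *ᵥ x` vanishes only when
`Dᴴ *ᵥ x = 0`, so the range of `N * Dᴴ` meets the kernel of `D` trivially; the two dimensions add
up by rank-nullity, because `D` and `Dᴴ` have the same rank. With `N = M⁻¹` this splits a velocity
field into a weak gradient and a nondivergent field, and exactness supplies a stream function for
the latter. -/

section WeightedComplement

variable {m n K : Type*} [Fintype m] [Fintype n]

theorem conjTranspose_mul_mul_same_mulVec_eq_zero_iff [Ring K] [PartialOrder K] [StarRing K]
    {N : Matrix n n K} (hN : N.PosDef) (A : Matrix n m K) (x : m → K) :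
    (Aᴴ * N * A) *ᵥ x = 0 ↔ A *ᵥ x = 0 := by
  refine ⟨fun h => ?_, fun h => by rw [← mulVec_mulVec, h, mulVec_zero]⟩
  by_contra hAx
  refine (hN.dotProduct_mulVec_pos hAx).ne' ?_
  calc star (A *ᵥ x) ⬝ᵥ (N *ᵥ (A *ᵥ x)) = star x ⬝ᵥ ((Aᴴ * N * A) *ᵥ x) := by
        simp only [star_mulVec, dotProduct_mulVec, vecMul_vecMul]
    _ = 0 := by rw [h, dotProduct_zero]

theorem disjoint_range_mul_conjTranspose_ker [CommRing K] [PartialOrder K] [StarRing K]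
    {N : Matrix n n K} (hN : N.PosDef) (D : Matrix m n K) :
    Disjoint (LinearMap.range (N * Dᴴ).mulVecLin) (LinearMap.ker D.mulVecLin) := by
  rw [Submodule.disjoint_def]
  rintro _ ⟨x, rfl⟩ hx
  simp only [LinearMap.mem_ker, mulVecLin_apply, mulVec_mulVec, ← Matrix.mul_assoc] at hx
  have hDx : Dᴴ *ᵥ x = 0 := by
    rwa [← conjTranspose_mul_mul_same_mulVec_eq_zero_iff hN, conjTranspose_conjTranspose]
  rw [mulVecLin_apply, ← mulVec_mulVec, hDx, mulVec_zero]

theorem isCompl_range_mul_conjTranspose_ker [Field K] [PartialOrder K] [StarRing K]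
    [StarOrderedRing K] {N : Matrix n n K} (hN : N.PosDef) (D : Matrix m n K) :
    IsCompl (LinearMap.range (N * Dᴴ).mulVecLin) (LinearMap.ker D.mulVecLin) := by
  classical
  have hrank : (N * Dᴴ).rank = D.rank := by
    rw [rank_mul_eq_right_of_isUnit_det _ _ ((isUnit_iff_isUnit_det N).mp hN.isUnit),
      rank_conjTranspose]
  refine (Submodule.isCompl_iff_disjoint _ _ ?_).mpr (disjoint_range_mul_conjTranspose_ker hN D)
  calc Module.finrank K (n → K)
      = D.rank + Module.finrank K (LinearMap.ker D.mulVecLin) :=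
        D.mulVecLin.finrank_range_add_finrank_ker.symm
    _ ≤ (N * Dᴴ).rank + Module.finrank K (LinearMap.ker D.mulVecLin) := by rw [hrank]

end WeightedComplement

theorem discrete_helmholtz_decomposition_general
    {C E V K : Type*} [Fintype C] [Fintype E] [Fintype V] [DecidableEq C] [DecidableEq E]
    [Field K] [PartialOrder K] [StarRing K] [StarOrderedRing K]
    (D₂ : Matrix C E K) (D₁ : Matrix E V K) (L : Matrix C C K) (M : Matrix E E K)
    (hM : M.PosDef) (hL : IsUnit L.det)
    (hExact : ∀ u : E → K, D₂ *ᵥ u = 0 → ∃ ψ : V → K, u = D₁ *ᵥ ψ) (U : E → K) :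
    ∃ (Φ : C → K) (Ψ : V → K), U = M⁻¹ *ᵥ ((-D₂ᴴ) *ᵥ (L *ᵥ Φ)) - D₁ *ᵥ Ψ := by
  obtain ⟨_, ⟨w, rfl⟩, u, hu, hU⟩ := Submodule.mem_sup.mp <|
    (isCompl_range_mul_conjTranspose_ker hM.inv D₂).sup_eq_top ▸ Submodule.mem_top (x := U)
  obtain ⟨ψ, rfl⟩ := hExact u hu
  obtain ⟨Φ, hΦ⟩ := mulVec_surjective_iff_isUnit.mpr ((isUnit_iff_isUnit_det L).mpr hL) (-w)
  refine ⟨Φ, -ψ, ?_⟩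
  rw [hΦ, neg_mulVec_neg, mulVec_mulVec, mulVec_neg, sub_neg_eq_add]
  exact hU.symm

/-- Discrete Helmholtz decomposition: if `M` is symmetric positive definite,
`L` is invertible, `D₂ D₁ = 0`, and every discretely nondivergent field has
a stream function (exactness: `ker (D₂ ·) ⊆ range (D₁ ·)`), then every
discrete velocity field `U` decomposes into a weak-gradient (divergent)
part and a rotational part: `U = M⁻¹ (D̄₁ (L Φ)) - D₁ Ψ` with `D̄₁ = -D₂ᵀ`. -/
theorem discrete_helmholtz_decomposition
    {C E V : Type*} [Fintype C] [Fintype E] [Fintype V]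
    [DecidableEq C] [DecidableEq E]
    (D₂ : Matrix C E ℝ) (D₁ : Matrix E V ℝ)
    (L : Matrix C C ℝ) (M : Matrix E E ℝ)
    (hM : M.PosDef) (hL : IsUnit L.det) (hDD : D₂ * D₁ = 0)
    (hExact : ∀ u : E → ℝ, D₂.mulVec u = 0 → ∃ ψ : V → ℝ, u = D₁.mulVec ψ) :
    ∀ U : E → ℝ, ∃ (Φ : C → ℝ) (Ψ : V → ℝ),
      U = M⁻¹.mulVec ((-D₂ᵀ).mulVec (L.mulVec Φ)) - D₁.mulVec Ψ := by
  rw [← conjTranspose_eq_transpose_of_trivial]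
  exact discrete_helmholtz_decomposition_general D₂ D₁ L M hM hL hExact
end
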